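/- In a plane triangulation H with outer 4-cycle C = u,v,x,y, any proper 4-coloring of the 4-cycle C in which u and x receive the same color extends to a proper 5-coloring of H. -/

import Mathlib

open SimpleGraph

/-- A closed walk is chordless (induced) if every adjacency of `G` between vertices of
the walk is an edge of the walk. -/
def WalkChordless {V : Type} {G : SimpleGraph V} {x : V} (c : G.Walk x x) : Prop :=
  ∀ ⦃a b : V⦄, a ∈ c.support → b ∈ c.support → G.Adj a b → s(a, b) ∈ c.edges

/-- Distance (in `ℕ∞`, `⊤` if unreachable) from a set of vertices to a vertex. -/
noncomputable def setDist {V : Type} (G : SimpleGraph V) (A : Set V) (v : V) : ℕ∞ :=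
  sInf {n : ℕ∞ | ∃ a ∈ A, ∃ p : G.Walk a v, (p.length : ℕ∞) = n}

/-- Distance (in `ℕ∞`) between two sets of vertices. -/
noncomputable def setSetDist {V : Type} (G : SimpleGraph V) (A B : Set V) : ℕ∞ :=
  sInf {n : ℕ∞ | ∃ a ∈ A, ∃ b ∈ B, ∃ p : G.Walk a b, (p.length : ℕ∞) = n}

/-- `K` is a minor of `H`: disjoint nonempty connected branch sets joined as in `K`. -/
def HasGraphMinor {W W' : Type} (H : SimpleGraph W) (K : SimpleGraph W') : Prop :=
  ∃ f : W' → Set W,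
    (∀ i, (f i).Nonempty) ∧ (∀ i, (H.induce (f i)).Connected) ∧
    (Pairwise fun i j => Disjoint (f i) (f j)) ∧
    (∀ ⦃i j : W'⦄, K.Adj i j → ∃ a ∈ f i, ∃ b ∈ f j, H.Adj a b)

/-- Planarity via Wagner's theorem: no `K₅` and no `K₃,₃` minor. -/
def IsPlanar {W : Type} (H : SimpleGraph W) : Prop :=
  ¬ HasGraphMinor H (completeGraph (Fin 5)) ∧
  ¬ HasGraphMinor H (completeBipartiteGraph (Fin 3) (Fin 3))

/-- Abstract data of a 2-cell embedding of a simple graph `G` in a surface: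
Euler genus, orientability, contractibility/homotopy of closed walks, faces,
sidedness, local left/right neighbours along walks, and interiors of
contractible cycles. -/
structure SurfaceEmbedding {V : Type} (G : SimpleGraph V) where
  eulerGenus : ℕ
  orientable : Prop
  IsCellular : Prop
  IsTriangulation : Prop
  Contractible : ∀ ⦃x : V⦄, G.Walk x x → Prop
  TwoSided : ∀ ⦃x : V⦄, G.Walk x x → Prop
  Homotopic : ∀ ⦃x y : V⦄, G.Walk x x → G.Walk y y → Prop
  BoundsFace : ∀ ⦃x : V⦄, G.Walk x x → Prop
  rightAt : ∀ ⦃a b : V⦄, G.Walk a b → V → Set V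
  leftAt : ∀ ⦃a b : V⦄, G.Walk a b → V → Set V
  rightAt_adj : ∀ ⦃a b : V⦄ (p : G.Walk a b) (v u : V), u ∈ rightAt p v → G.Adj v u
  leftAt_adj : ∀ ⦃a b : V⦄ (p : G.Walk a b) (v u : V), u ∈ leftAt p v → G.Adj v u
  Inside : ∀ ⦃x : V⦄, G.Walk x x → Set V

namespace SurfaceEmbedding

variable {V : Type} {G : SimpleGraph V}

/-- A noncontractible cycle of the embedding. -/
def IsNCCycle (emb : SurfaceEmbedding G) {x : V} (c : G.Walk x x) : Prop :=
  c.IsCycle ∧ ¬ emb.Contractible c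

/-- The width (edge-width) of the embedding: length of a shortest noncontractible cycle. -/
noncomputable def width (emb : SurfaceEmbedding G) : ℕ∞ :=
  sInf {n : ℕ∞ | ∃ (x : V) (c : G.Walk x x), emb.IsNCCycle c ∧ (c.length : ℕ∞) = n}

/-- `c` is a shortest noncontractible cycle. -/
def IsShortestNC (emb : SurfaceEmbedding G) {x : V} (c : G.Walk x x) : Prop :=
  emb.IsNCCycle c ∧ ∀ ⦃y : V⦄ (e : G.Walk y y), emb.IsNCCycle e → c.length ≤ e.length

/-- A witness of length `n` for `ncdist`: either a noncontractible cycle meeting `c`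
in exactly one vertex, or a path with both ends on `c`, interior disjoint from `c`,
forming a noncontractible cycle with every arc of `c` between its endpoints. -/
def IsNCDistWitness (emb : SurfaceEmbedding G) {x : V} (c : G.Walk x x) (n : ℕ) : Prop :=
  (∃ (a : V) (P : G.Walk a a), a ∈ c.support ∧ P.IsCycle ∧
      (∀ v ∈ P.support, v ∈ c.support → v = a) ∧ ¬ emb.Contractible P ∧ P.length = n) ∨
  (∃ (a b : V) (P : G.Walk a b), a ≠ b ∧ a ∈ c.support ∧ b ∈ c.support ∧ P.IsPath ∧
      (∀ v ∈ P.support, v ∈ c.support → v = a ∨ v = b) ∧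
      (∀ Q : G.Walk b a, Q.IsPath → Q.edges ⊆ c.edges → ¬ emb.Contractible (P.append Q)) ∧
      P.length = n)

/-- `ncdist` of a cycle: minimum length of an `ncdist` witness (`⊤` if none exists). -/
noncomputable def ncdist (emb : SurfaceEmbedding G) {x : V} (c : G.Walk x x) : ℕ∞ :=
  sInf {n : ℕ∞ | ∃ m : ℕ, emb.IsNCDistWitness c m ∧ (m : ℕ∞) = n}

/-- Right neighbours of a walk. -/
def RightNbrs (emb : SurfaceEmbedding G) {a b : V} (p : G.Walk a b) : Set V :=
  {u | ∃ v ∈ p.support, u ∈ emb.rightAt p v}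

/-- Left neighbours of a walk. -/
def LeftNbrs (emb : SurfaceEmbedding G) {a b : V} (p : G.Walk a b) : Set V :=
  {u | ∃ v ∈ p.support, u ∈ emb.leftAt p v}

/-- `R^k(C)`: vertices at distance exactly `k` from `C` reached by a shortest path
whose first edge leaves `C` to the right. -/
def Rlevel (emb : SurfaceEmbedding G) {x : V} (c : G.Walk x x) (k : ℕ) : Set V :=
  {v | setDist G {w | w ∈ c.support} v = (k : ℕ∞) ∧
    ∃ u ∈ c.support, ∃ p : G.Walk u v, p.IsPath ∧ p.length = k ∧
      p.getVert 1 ∈ emb.RightNbrs c}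

/-- `L^k(C)`: vertices at distance exactly `k` from `C` reached by a shortest path
whose first edge leaves `C` to the left. -/
def Llevel (emb : SurfaceEmbedding G) {x : V} (c : G.Walk x x) (k : ℕ) : Set V :=
  {v | setDist G {w | w ∈ c.support} v = (k : ℕ∞) ∧
    ∃ u ∈ c.support, ∃ p : G.Walk u v, p.IsPath ∧ p.length = k ∧
      p.getVert 1 ∈ emb.LeftNbrs c}

/-- The `k`-th canonical cycle of `x`: a contractible cycle `D` with `x` inside, all
of whose vertices are at distance exactly `k` from `x`, joined to `x` by paths of
length `k` inside the closed disk bounded by `D`. -/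
def IsCanonicalCycle (emb : SurfaceEmbedding G) (x : V) (k : ℕ) {y : V}
    (D : G.Walk y y) : Prop :=
  D.IsCycle ∧ emb.Contractible D ∧ x ∈ emb.Inside D ∧
  (∀ z ∈ D.support, G.dist x z = k) ∧
  (∀ z ∈ D.support, ∃ p : G.Walk x z, p.length = k ∧
     ∀ v ∈ p.support, v ∈ emb.Inside D ∨ v ∈ D.support)

/-- The result of cutting the embedded graph `G` along a chordless noncontractible
cycle `C` and capping with apex vertices: a new embedded graph `G'` together with
the projection back to `G` (apex vertices project to `none`). -/
structure Cutting (emb : SurfaceEmbedding G) {x : V} (C : G.Walk x x) where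
  V' : Type
  G' : SimpleGraph V'
  emb' : SurfaceEmbedding G'
  proj : V' → Option V
  proj_edge : ∀ ⦃a b : V'⦄, G'.Adj a b → ∀ u v : V,
    proj a = some u → proj b = some v → G.Adj u v
  tri : emb.IsTriangulation → emb'.IsTriangulation

/-- Cutting along a 2-sided cycle yields two apex vertices, one for each side. -/
structure TwoSidedCutting (emb : SurfaceEmbedding G) {x : V} (C : G.Walk x x)
    extends Cutting emb C where
  apexR : toCutting.V'
  apexL : toCutting.V'
  apexR_proj : toCutting.proj apexR = none
  apexL_proj : toCutting.proj apexL = none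
  apex_ne : apexR ≠ apexL

/-- A 6-shortcut for a cycle `C`: a path `P` of length 6 with both ends on `C`,
together with an arc `A` of `C`, so that `P.append A` is a noncontractible cycle
homotopic to `C`. -/
structure SixShortcut (emb : SurfaceEmbedding G) {x : V} (C : G.Walk x x) where
  a : V
  b : V
  P : G.Walk a b
  A : G.Walk b a
  P_len : P.length = 6
  P_path : P.IsPath
  ha : a ∈ C.support
  hb : b ∈ C.support
  arc_sub : A.edges ⊆ C.edges
  arc_path : A.IsPath
  cyc : (P.append A).IsCycle
  noncontr : ¬ emb.Contractible (P.append A)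
  homot : emb.Homotopic (P.append A) C

/-- The cycle `C'` produced by a 6-shortcut. -/
def SixShortcut.newCycle {emb : SurfaceEmbedding G} {x : V} {C : G.Walk x x}
    (s : SixShortcut emb C) : G.Walk s.a s.a := s.P.append s.A

/-- A 6-shortcut is optimal if the resulting cycle is as short as possible. -/
def SixShortcut.IsOptimal {emb : SurfaceEmbedding G} {x : V} {C : G.Walk x x}
    (s : SixShortcut emb C) : Prop :=
  ∀ t : SixShortcut emb C, s.newCycle.length ≤ t.newCycle.length

/-- A contractible 4-cycle bounds two triangular faces sharing a diagonal. -/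
def IsDoubleTriangle (emb : SurfaceEmbedding G) {y : V} (D : G.Walk y y) : Prop :=
  ∃ (a c : V), G.Adj a c ∧ a ∈ D.support ∧ c ∈ D.support ∧ s(a, c) ∉ D.edges ∧
    ∃ (T₁ T₂ : G.Walk a a), T₁.IsCycle ∧ T₂.IsCycle ∧ T₁.length = 3 ∧ T₂.length = 3 ∧
      emb.BoundsFace T₁ ∧ emb.BoundsFace T₂ ∧ s(a, c) ∈ T₁.edges ∧ s(a, c) ∈ T₂.edges ∧
      (∀ v ∈ T₁.support, v ∈ D.support) ∧ (∀ v ∈ T₂.support, v ∈ D.support) ∧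
      (∀ e ∈ D.edges, e ∈ T₁.edges ∨ e ∈ T₂.edges)

/-- A 4-cycle is the first neighbour circuit of a vertex of degree 4. -/
def IsFirstNbrCircuit (emb : SurfaceEmbedding G) {y : V} (D : G.Walk y y) : Prop :=
  ∃ v : V, (G.neighborSet v).ncard = 4 ∧ G.neighborSet v = {w | w ∈ D.support} ∧
    v ∈ emb.Inside D

/-- The induced subgraph on `U` is orderly: every contractible 3-cycle in `U` bounds
a face, and every contractible 4-cycle in `U` bounds two triangles sharing an edge
or is the first neighbour circuit of a vertex of degree 4. -/
def Orderly (emb : SurfaceEmbedding G) (U : Set V) : Prop :=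
  (∀ ⦃y : V⦄ (D : G.Walk y y), D.IsCycle → (∀ v ∈ D.support, v ∈ U) → D.length = 3 →
      emb.Contractible D → emb.BoundsFace D) ∧
  (∀ ⦃y : V⦄ (D : G.Walk y y), D.IsCycle → (∀ v ∈ D.support, v ∈ U) → D.length = 4 →
      emb.Contractible D → emb.IsDoubleTriangle D ∨ emb.IsFirstNbrCircuit D)

/-- A witness for `ctdist` of a 2-sided cycle `C`: a path (or cycle) with both ends
on `C`, interior disjoint from `C`, starting with an edge on one side of `C` and
ending with an edge on the other side. -/
def IsCrossWitness (emb : SurfaceEmbedding G) {x : V} (C : G.Walk x x)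
    {a b : V} (P : G.Walk a b) : Prop :=
  a ∈ C.support ∧ b ∈ C.support ∧ 1 ≤ P.length ∧
  (∀ v ∈ P.support, v ∈ C.support → v = a ∨ v = b) ∧
  ((P.getVert 1 ∈ emb.RightNbrs C ∧ P.getVert (P.length - 1) ∈ emb.LeftNbrs C) ∨
   (P.getVert 1 ∈ emb.LeftNbrs C ∧ P.getVert (P.length - 1) ∈ emb.RightNbrs C)) ∧
  (∀ h : a = b, (P.copy rfl h.symm).IsCycle) ∧ (a ≠ b → P.IsPath)

/-- `ctdist` of a 2-sided cycle: minimum length of a side-crossing witness. -/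
noncomputable def ctdist (emb : SurfaceEmbedding G) {x : V} (C : G.Walk x x) : ℕ∞ :=
  sInf {n : ℕ∞ | ∃ (a b : V) (P : G.Walk a b),
    emb.IsCrossWitness C P ∧ (P.length : ℕ∞) = n}

end SurfaceEmbedding

/-- The graph obtained from `H` by identifying the vertex `x` with the vertex `u`. -/
def mergeVerts {W : Type} [DecidableEq W] (H : SimpleGraph W) (u x : W) :
    SimpleGraph W :=
  SimpleGraph.fromRel fun a b =>
    ∃ p q : W, H.Adj p q ∧ (if p = x then u else p) = a ∧ (if q = x then u else q) = b

/-!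
A colouring of `H` in which `u` and `x` agree is a colouring of the graph with `u` and `x`
identified, so it suffices to precolour the path `v`, `u`, `y` there; permuting the colours at the
end, only `v` and `y` need to be precoloured. Of planarity only the absence of a `K₅` minor is used.
Mader's bound of `3n - 6` edges for `K₅`-minor-free graphs yields a vertex `w` of degree at most `5`
other than `v` and `y`. If its neighbours are bound to receive at most four colours, delete `w` and
colour it last. Otherwise two of its neighbours are nonadjacent, since there is no `K₅`; contracting
them together with `w` gives them a common colour and again leaves a colour for `w`. Infinite graphs
follow from finite ones by compactness.
-/

section Minor

variable {V V' W : Type} {G : SimpleGraph V} {G' : SimpleGraph V'} {K : SimpleGraph W}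

theorem HasGraphMinor.refl (G : SimpleGraph V) : HasGraphMinor G G :=
  ⟨fun p => {p}, Set.singleton_nonempty, fun _ => Connected.of_subsingleton,
    fun _ _ h => Set.disjoint_singleton.2 h, fun p q h => ⟨p, rfl, q, rfl, h⟩⟩

theorem HasGraphMinor.of_isContained (h : G' ⊑ G) (hK : HasGraphMinor G' K) :
    HasGraphMinor G K := by
  obtain ⟨φ⟩ := h
  obtain ⟨f, hne, hconn, hdisj, hadj⟩ := hK
  refine ⟨fun i => φ '' f i, fun i => (hne i).image φ, fun i => ?_,
    fun i j h => (Set.disjoint_image_iff φ.injective).2 (hdisj h), fun i j h => ?_⟩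
  · exact (hconn i).map (induceHom φ.toHom (Set.mapsTo_image φ (f i)))
      (Set.surjective_mapsTo_image_restrict φ (f i))
  · obtain ⟨a, ha, b, hb, hab⟩ := hadj h
    exact ⟨φ a, ⟨a, ha, rfl⟩, φ b, ⟨b, hb, rfl⟩, φ.toHom.map_adj hab⟩

theorem connected_induce_preimage {φ : V → V'} (hφ : ∀ z, (G.induce (φ ⁻¹' {z})).Connected)
    {S : Set V'} (hS : ((G.map φ).induce S).Connected) : (G.induce (φ ⁻¹' S)).Connected := by
  have fiber (p q : φ ⁻¹' S) (hpq : φ p = φ q) : (G.induce (φ ⁻¹' S)).Reachable p q := by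
    have hsub : φ ⁻¹' {φ q} ⊆ φ ⁻¹' S := Set.preimage_mono (Set.singleton_subset_iff.2 q.2)
    exact (hφ (φ q) ⟨p, hpq⟩ ⟨q, rfl⟩).map (G.induceHomOfLE hsub).toHom
  have lift (z z' : S) (h : ((G.map φ).induce S).Reachable z z') (p q : φ ⁻¹' S)
      (hp : φ p = z) (hq : φ q = z') : (G.induce (φ ⁻¹' S)).Reachable p q := by
    rw [reachable_iff_reflTransGen] at h
    induction h generalizing q with
    | refl => exact fiber p q (hp.trans hq.symm)
    | @tail z' z'' _ hzz ih =>
      obtain ⟨-, p', q', hadj, hp', hq'⟩ := hzz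
      have hp'S : φ p' ∈ S := hp'.symm ▸ z'.2
      have hq'S : φ q' ∈ S := hq'.symm ▸ z''.2
      have hstep : (G.induce (φ ⁻¹' S)).Adj ⟨p', hp'S⟩ ⟨q', hq'S⟩ := hadj
      exact ((ih ⟨p', hp'S⟩ hp').trans hstep.reachable).trans
        (fiber ⟨q', hq'S⟩ q (hq'.trans hq.symm))
  obtain ⟨z⟩ := hS.nonempty
  obtain ⟨p, hp⟩ := (hφ z).nonempty
  have : Nonempty (φ ⁻¹' S) := ⟨⟨p, Set.mem_of_eq_of_mem (x := φ p) hp z.2⟩⟩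
  exact ⟨fun p q => lift ⟨_, p.2⟩ ⟨_, q.2⟩ (hS _ _) p q rfl rfl⟩

theorem HasGraphMinor.of_map {φ : V → V'} (hφ : ∀ z, (G.induce (φ ⁻¹' {z})).Connected)
    (hK : HasGraphMinor (G.map φ) K) : HasGraphMinor G K := by
  obtain ⟨f, -, hconn, hdisj, hadj⟩ := hK
  have hconn' i := connected_induce_preimage hφ (hconn i)
  refine ⟨fun i => φ ⁻¹' f i, fun i => Set.nonempty_coe_sort.1 (hconn' i).nonempty, hconn',
    fun i j h => (hdisj h).preimage φ, fun i j h => ?_⟩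
  obtain ⟨_, ha, _, hb, -, p, q, hpq, rfl, rfl⟩ := hadj h
  exact ⟨p, ha, q, hb, hpq⟩

end Minor

section Contraction

variable {V W : Type} {G : SimpleGraph V} {K : SimpleGraph W} {A : Set V}

open Classical in
/-- The projection of the vertex set that collapses `A` to the single point `none`. -/
noncomputable def contractMap (A : Set V) (p : V) : Option ↥Aᶜ :=
  if h : p ∈ A then none else some ⟨p, h⟩

theorem contractMap_of_mem {p : V} (h : p ∈ A) : contractMap A p = none := dif_pos h

theorem contractMap_of_notMem {p : V} (h : p ∉ A) : contractMap A p = some ⟨p, h⟩ := dif_neg h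

theorem contractMap_eq_contractMap_iff {p q : V} :
    contractMap A p = contractMap A q ↔ p = q ∨ p ∈ A ∧ q ∈ A := by
  by_cases hp : p ∈ A <;> by_cases hq : q ∈ A <;>
    simp [contractMap, hp, hq]
  all_goals grind

/-- The contraction `G / A` of a vertex set `A`: its points become one vertex `none`, while the
vertices outside `A` survive; loops and multiple edges are discarded. -/
noncomputable def contract (G : SimpleGraph V) (A : Set V) : SimpleGraph (Option ↥Aᶜ) :=
  G.map (contractMap A)

theorem contract_adj_of_adj {p q : V} (h : G.Adj p q) (hA : ¬ (p ∈ A ∧ q ∈ A)) :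
    (contract G A).Adj (contractMap A p) (contractMap A q) :=
  map_adj_apply' h fun hpq => (contractMap_eq_contractMap_iff.1 hpq).elim h.ne hA

theorem HasGraphMinor.of_contract (hA : (G.induce A).Connected)
    (hK : HasGraphMinor (contract G A) K) : HasGraphMinor G K := by
  refine HasGraphMinor.of_map (fun z => ?_) hK
  obtain ⟨p, rfl⟩ : ∃ p, contractMap A p = z := by
    rcases z with _ | ⟨p, hp⟩
    · obtain ⟨p⟩ := hA.nonempty
      exact ⟨p, contractMap_of_mem p.2⟩
    · exact ⟨p, contractMap_of_notMem hp⟩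
  by_cases hp : p ∈ A
  · have : contractMap A ⁻¹' {contractMap A p} = A := by
      ext q
      simp only [Set.mem_preimage, Set.mem_singleton_iff, contractMap_eq_contractMap_iff]
      grind
    rwa [this]
  · have : contractMap A ⁻¹' {contractMap A p} = {p} := by
      ext q
      simp [contractMap_eq_contractMap_iff, hp]
    rw [this]
    exact Connected.of_subsingleton

theorem card_option_compl_add_ncard [Finite V] (A : Set V) :
    Nat.card (Option ↥Aᶜ) + A.ncard = Nat.card V + 1 := by
  rw [Finite.card_option, ← Set.ncard_add_ncard_compl A, Nat.card_coe_set_eq]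
  lia

theorem ncard_edgeSet_map_lt {V' : Type} [Finite V] {φ : V → V'} {a w : V} (haw : G.Adj a w)
    (hφ : φ a = φ w) : (G.map φ).edgeSet.ncard < G.edgeSet.ncard := by
  have hsub : (G.map φ).edgeSet ⊆ Sym2.map φ '' (G.edgeSet \ {s(a, w)}) := by
    rintro ⟨_, _⟩ ⟨hne, p, q, hpq, rfl, rfl⟩
    refine ⟨s(p, q), ⟨hpq, fun h => hne ?_⟩, rfl⟩
    rcases Sym2.eq_iff.1 h with ⟨rfl, rfl⟩ | ⟨rfl, rfl⟩
    exacts [hφ, hφ.symm]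
  calc (G.map φ).edgeSet.ncard
      ≤ (G.edgeSet \ {s(a, w)}).ncard := (Set.ncard_le_ncard hsub).trans (Set.ncard_image_le)
    _ < G.edgeSet.ncard := Set.ncard_sdiff_singleton_lt_of_mem haw

end Contraction

section EdgeBound

open scoped Finset

variable {V : Type} {G : SimpleGraph V}

theorem HasGraphMinor.of_not_cliqueFree {n : ℕ} (h : ¬ G.CliqueFree n) :
    HasGraphMinor G (completeGraph (Fin n)) :=
  .of_isContained ((not_cliqueFree_iff_top_isContained n).1 h) (.refl _)

theorem HasGraphMinor.of_isNClique_of_connected {n : ℕ} {A : Set V} {s : Finset V}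
    (hA : (G.induce A).Connected) (hs : G.IsNClique n s)
    (h : ∀ p ∈ s, p ∉ A ∧ ∃ q ∈ A, G.Adj q p) : HasGraphMinor G (completeGraph (Fin (n + 1))) := by
  classical
  have hinj : Set.InjOn (contractMap A) s := fun p hp _ _ hpq =>
    (contractMap_eq_contractMap_iff.1 hpq).resolve_right fun hA => (h p hp).1 hA.1
  have himage : (contract G A).IsNClique n (s.image (contractMap A)) := by
    refine ⟨?_, (Finset.card_image_of_injOn hinj).trans hs.card_eq⟩
    rw [Finset.coe_image]
    rintro _ ⟨p, hp, rfl⟩ _ ⟨q, hq, rfl⟩ hne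
    exact contract_adj_of_adj (hs.isClique hp hq fun hpq => hne (congrArg _ hpq))
      fun hA => (h p hp).1 hA.1
  have hinsert : ∀ z ∈ s.image (contractMap A), (contract G A).Adj none z := by
    intro z hz
    obtain ⟨p, hp, rfl⟩ := Finset.mem_image.1 hz
    obtain ⟨hpA, q, hq, hadj⟩ := h p hp
    rw [← contractMap_of_mem hq]
    exact contract_adj_of_adj hadj fun hA => hpA hA.2
  exact .of_contract hA (.of_not_cliqueFree fun hfree => hfree _ (himage.insert hinsert))

theorem exists_not_adj_of_not_hasGraphMinor {n : ℕ}
    (hG : ¬ HasGraphMinor G (completeGraph (Fin (n + 1)))) {w : V} {T : Finset V} (hT : n ≤ #T)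
    (hw : ∀ t ∈ T, G.Adj w t) : ∃ a ∈ T, ∃ b ∈ T, a ≠ b ∧ ¬ G.Adj a b := by
  by_contra! h
  obtain ⟨s, hsT, hs⟩ := Finset.exists_subset_card_eq hT
  refine hG (.of_isNClique_of_connected (A := {w}) (s := s) Connected.of_subsingleton
    ⟨fun a ha b hb hab => h a (hsT ha) b (hsT hb) hab, hs⟩ fun p hp => ?_)
  exact ⟨(hw p (hsT hp)).ne', w, rfl, hw p (hsT hp)⟩

theorem HasGraphMinor.completeGraph_five_of_common_neighbors {w a b c d e : V}
    (hwa : G.Adj w a) (hwb : G.Adj w b) (hde : G.Adj d e) (hab : a ≠ b) (hcd : c ≠ d) (hce : c ≠ e)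
    (hcommon : ∀ t ∈ ({c, d, e} : Set V), G.Adj w t ∧ G.Adj a t ∧ G.Adj b t) :
    HasGraphMinor G (completeGraph (Fin 5)) := by
  classical
  obtain ⟨hwc, hac, hbc⟩ := hcommon c (by simp)
  obtain ⟨hwd, had, hbd⟩ := hcommon d (by simp)
  obtain ⟨hwe, hae, hbe⟩ := hcommon e (by simp)
  have hclique : G.IsNClique 4 {w, b, d, e} :=
    (is3Clique_triple_iff.2 ⟨hbd, hbe, hde⟩).insert (by simp [hwb, hwd, hwe])
  refine .of_isNClique_of_connected (induce_pair_connected_of_adj hac) hclique ?_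
  simp [hwa.ne, hwc.ne, hwa.symm, hab.symm, hbc.ne, hbc.symm, had.ne', hcd.symm, had, hae.ne',
    hce.symm, hae]

section LocallyFinite

variable [DecidableEq V] [G.LocallyFinite]

theorem neighborFinset_inter_eq_sdiff_pair {w a b : V} (hdeg : G.degree w ≤ 5) (hwa : G.Adj w a)
    (hwb : G.Adj w b) (hab : a ≠ b) (hnab : ¬ G.Adj a b)
    (hcommon : 2 < #(G.neighborFinset w ∩ G.neighborFinset a)) :
    G.neighborFinset w ∩ G.neighborFinset a = G.neighborFinset w \ {a, b} := by
  refine Finset.eq_of_subset_of_card_le (fun t ht => ?_) (le_trans ?_ hcommon)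
  · simp only [Finset.mem_inter, mem_neighborFinset] at ht
    have htb : t ≠ b := fun h => hnab (h ▸ ht.2)
    simp [ht.1, ht.2.ne', htb]
  · rw [Finset.card_sdiff_of_subset (by simp [Finset.insert_subset_iff, hwa, hwb]),
      Finset.card_pair hab]
    exact Nat.sub_le_sub_right hdeg 2

-- If every neighbour of `w` had three neighbours around `w`, then two nonadjacent neighbours `a`,
-- `b` of `w` would see all the others, and contracting an edge `ac` would leave the clique
-- `w`, `a`, `b`, `d`, `e`.
theorem exists_card_inter_neighborFinset_le_two
    (hG : ¬ HasGraphMinor G (completeGraph (Fin 5))) {w : V} (hpos : 0 < G.degree w)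
    (hdeg : G.degree w ≤ 5) :
    ∃ z, G.Adj w z ∧ #(G.neighborFinset w ∩ G.neighborFinset z) ≤ 2 := by
  by_contra! hcommon
  set N := G.neighborFinset w with hN
  have hadj {t : V} (ht : t ∈ N) : G.Adj w t := (G.mem_neighborFinset w t).1 ht
  have hfour : 4 ≤ #N := by
    obtain ⟨z, hz⟩ := (G.degree_pos_iff_exists_adj w).1 hpos
    have hssub : N ∩ G.neighborFinset z ⊂ N :=
      ⟨Finset.inter_subset_left, fun h => by simpa [hN, hz] using @h z⟩
    exact Nat.lt_of_le_of_lt (hcommon z hz) (Finset.card_lt_card hssub)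
  obtain ⟨a, ha, b, hb, hab, hnab⟩ := exists_not_adj_of_not_hasGraphMinor hG hfour fun _ => hadj
  have hNa := neighborFinset_inter_eq_sdiff_pair hdeg (hadj ha) (hadj hb) hab hnab
    (hcommon a (hadj ha))
  have hNb := neighborFinset_inter_eq_sdiff_pair hdeg (hadj hb) (hadj ha) hab.symm
    (fun h => hnab h.symm) (hcommon b (hadj hb))
  rw [Finset.pair_comm] at hNb
  have hrest {t : V} (ht : t ∈ N \ {a, b}) : G.Adj w t ∧ G.Adj a t ∧ G.Adj b t := by
    have hta := hNa.ge ht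
    have htb := hNb.ge ht
    simp only [Finset.mem_inter, mem_neighborFinset] at hta htb
    exact ⟨hta.1, hta.2, htb.2⟩
  have hthree : 2 < #(N \ {a, b}) := hNa ▸ hcommon a (hadj ha)
  obtain ⟨e, he⟩ : (N \ {a, b}).Nonempty := Finset.card_pos.1 (Nat.zero_lt_of_lt hthree)
  obtain ⟨d, hd, hdab⟩ := Finset.exists_mem_notMem_of_card_lt_card
    (Finset.card_le_two.trans_lt (hcommon e (hrest he).1) : #{a, b} < _)
  obtain ⟨hdN, hed⟩ := Finset.mem_inter.1 hd
  have hd : d ∈ N \ {a, b} := Finset.mem_sdiff.2 ⟨hdN, hdab⟩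
  obtain ⟨c, hc, hcde⟩ := Finset.exists_mem_notMem_of_card_lt_card
    (Finset.card_le_two.trans_lt hthree : #{d, e} < _)
  simp only [Finset.mem_insert, Finset.mem_singleton, not_or] at hcde
  refine hG (.completeGraph_five_of_common_neighbors (hadj ha) (hadj hb)
    ((G.mem_neighborFinset e d).1 hed).symm hab hcde.1 hcde.2 ?_)
  rintro t (rfl | rfl | rfl)
  exacts [hrest hc, hrest hd, hrest he]

end LocallyFinite

theorem ncard_edgeSet_le_contract_pair [Finite V] (G : SimpleGraph V) (w z : V) :
    G.edgeSet.ncard ≤ (contract G {w, z}).edgeSet.ncard + (G.commonNeighbors w z).ncard + 1 := by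
  set R : Set (Sym2 V) := insert s(w, z) ((fun t => s(w, t)) '' G.commonNeighbors w z) with hR
  have hRcard : R.ncard ≤ (G.commonNeighbors w z).ncard + 1 :=
    (Set.ncard_insert_le _ _).trans (Nat.add_le_add_right Set.ncard_image_le 1)
  have hmaps : ∀ e ∈ G.edgeSet \ R, e.map (contractMap {w, z}) ∈ (contract G {w, z}).edgeSet := by
    rintro ⟨p, q⟩ ⟨hpq, hpqR⟩
    refine contract_adj_of_adj hpq fun hA => hpqR ?_
    have := G.ne_of_adj hpq
    grind
  -- Distinct edges are identified only if they are `wt` and `zt` for a common neighbour `t`, and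
  -- then `wt` lies in `R`.
  have hinj : Set.InjOn (Sym2.map (contractMap {w, z})) (G.edgeSet \ R) := by
    rintro ⟨p, q⟩ ⟨hpq, hpqR⟩ ⟨p', q'⟩ ⟨hpq', hpqR'⟩ h
    rw [mem_edgeSet] at hpq hpq'
    simp only [Sym2.map_mk, Sym2.eq_iff, contractMap_eq_contractMap_iff, Set.mem_insert_iff,
      Set.mem_singleton_iff] at h
    simp only [hR, Set.mem_insert_iff, Set.mem_image, mem_commonNeighbors, Sym2.eq_iff]
      at hpqR hpqR'
    have := G.adj_comm
    have := @G.irrefl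
    grind
  have hle : (G.edgeSet \ R).ncard ≤ (contract G {w, z}).edgeSet.ncard :=
    Set.ncard_le_ncard_of_injOn _ hmaps hinj
  have := Set.ncard_le_ncard_sdiff_add_ncard G.edgeSet R
  lia

theorem exists_le_ncard_edgeSet_eq {k : ℕ} (hk : k ≤ G.edgeSet.ncard) :
    ∃ G' ≤ G, G'.edgeSet.ncard = k := by
  obtain ⟨E, hE, rfl⟩ := Set.exists_subset_card_eq hk
  have hdiag : (fromEdgeSet E).edgeSet = E := by
    rw [edgeSet_fromEdgeSet, sdiff_eq_left]
    exact Set.disjoint_left.2 fun e he => G.not_isDiag_of_mem_edgeSet (hE he)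
  exact ⟨fromEdgeSet E, edgeSet_subset_edgeSet.1 (hdiag.trans_subset hE), congrArg _ hdiag⟩

theorem ncard_edgeSet_induce_of_support_subset [Finite V] {S : Set V} (hS : G.support ⊆ S) :
    (G.induce S).edgeSet.ncard = G.edgeSet.ncard := by
  classical
  have := Fintype.ofFinite V
  rw [Set.ncard_eq_toFinset_card', Set.ncard_eq_toFinset_card']
  exact card_edgeFinset_induce_of_support_subset hS

theorem exists_degree_le_of_ncard_edgeSet_lt [Fintype V] [DecidableRel G.Adj] {k : ℕ}
    (h : 2 * G.edgeSet.ncard < (k + 1) * Nat.card V) : ∃ w, G.degree w ≤ k := by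
  classical
  by_contra! hdeg
  have hsum : ∑ _ : V, (k + 1) ≤ ∑ w, G.degree w := Finset.sum_le_sum fun w _ => hdeg w
  rw [sum_degrees_eq_twice_card_edges, Finset.sum_const, Finset.card_univ, smul_eq_mul,
    ← Nat.card_eq_fintype_card, edgeFinset, ← Set.ncard_eq_toFinset_card'] at hsum
  lia

theorem ncard_edgeSet_le_card_choose_two [Finite V] (G : SimpleGraph V) :
    G.edgeSet.ncard ≤ (Nat.card V).choose 2 := by
  classical
  have := Fintype.ofFinite V
  rw [Set.ncard_eq_toFinset_card', Nat.card_eq_fintype_card]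
  exact G.card_edgeFinset_le_card_choose_two

-- The induction works on a subgraph with exactly `3n - 5` edges, which has a vertex `w` of degree
-- at most `5`; contracting an edge `wz` with at most two common neighbours costs at most three
-- edges.
theorem ncard_edgeSet_add_six_le [Finite V] (hG : ¬ HasGraphMinor G (completeGraph (Fin 5)))
    (hV : 3 ≤ Nat.card V) : G.edgeSet.ncard + 6 ≤ 3 * Nat.card V := by
  classical
  induction hn : Nat.card V using Nat.strong_induction_on generalizing V with | _ n ih
  subst hn
  have := Fintype.ofFinite V
  by_contra! hlt
  obtain ⟨G', hle, hG'card⟩ := exists_le_ncard_edgeSet_eq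
    (show 3 * Nat.card V - 5 ≤ G.edgeSet.ncard by lia)
  have hG' : ¬ HasGraphMinor G' (completeGraph (Fin 5)) :=
    fun h => hG (.of_isContained (.of_le hle) h)
  have hfour : 4 ≤ Nat.card V := by
    by_contra! hV4
    have hchoose := ncard_edgeSet_le_card_choose_two G
    have hthree : Nat.choose 3 2 = 3 := rfl
    rw [(by lia : Nat.card V = 3), hthree] at hchoose
    lia
  obtain ⟨w, hw⟩ := exists_degree_le_of_ncard_edgeSet_lt (G := G') (k := 5) (by lia)
  rcases (G'.degree w).eq_zero_or_pos with hzero | hpos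
  · have hcard : Nat.card ↥({w}ᶜ : Set V) + 1 = Nat.card V := by
      rw [Nat.card_coe_set_eq, ← Set.ncard_add_ncard_compl {w}, Set.ncard_singleton, add_comm]
    have hsupport : G'.support ⊆ {w}ᶜ := fun t ht htw => by
      rw [mem_support, ← degree_pos_iff_exists_adj, Set.mem_singleton_iff.1 htw] at ht
      exact ht.ne' hzero
    have := ih _ (by lia) (fun h => hG' (.of_isContained ⟨Copy.induce G' {w}ᶜ⟩ h)) (by lia) rfl
    rw [ncard_edgeSet_induce_of_support_subset hsupport] at this
    lia
  · obtain ⟨z, hwz, hcommon⟩ := exists_card_inter_neighborFinset_le_two hG' hpos hw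
    have hcard := card_option_compl_add_ncard {w, z}
    rw [Set.ncard_pair hwz.ne] at hcard
    rw [← Set.ncard_coe_finset, Finset.coe_inter, coe_neighborFinset, coe_neighborFinset] at hcommon
    have := ih _ (by lia) (fun h => hG' (.of_contract (induce_pair_connected_of_adj hwz) h))
      (by lia) rfl
    have hcontract := ncard_edgeSet_le_contract_pair G' w z
    rw [commonNeighbors_eq] at hcontract
    lia

theorem exists_degree_le_five_of_card_le_two [Fintype V] [DecidableRel G.Adj]
    (hG : ¬ HasGraphMinor G (completeGraph (Fin 5))) {X : Finset V} (hX : #X ≤ 2)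
    (h : ∃ w ∉ X, 0 < G.degree w) : ∃ w ∉ X, 0 < G.degree w ∧ G.degree w ≤ 5 := by
  classical
  by_contra! hdeg
  set S := G.support.toFinset with hS
  have hmem {p : V} : p ∈ S ↔ 0 < G.degree p := by
    rw [hS, Set.mem_toFinset, mem_support, degree_pos_iff_exists_adj]
  have hcard : Nat.card G.support = #S := by rw [Nat.card_coe_set_eq, Set.ncard_eq_toFinset_card']
  have hsum : 6 * #S ≤ 2 * G.edgeSet.ncard + 5 * #X := calc
    6 * #S = ∑ _ ∈ S, 6 := by simp [mul_comm]
    _ ≤ ∑ p ∈ S, (G.degree p + if p ∈ X then 5 else 0) := Finset.sum_le_sum fun p hp => by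
      have := hmem.1 hp
      have := hdeg p
      grind
    _ ≤ ∑ p, (G.degree p + if p ∈ X then 5 else 0) :=
      Finset.sum_le_sum_of_subset (Finset.subset_univ S)
    _ = 2 * G.edgeSet.ncard + 5 * #X := by
      rw [Finset.sum_add_distrib, sum_degrees_eq_twice_card_edges, edgeFinset,
        ← Set.ncard_eq_toFinset_card']
      simp [mul_comm]
  have hthree : 3 ≤ #S := by
    obtain ⟨w, hwX, hw⟩ := h
    have hsub : G.neighborFinset w ⊆ S := fun t ht =>
      hmem.2 ((G.degree_pos_iff_exists_adj t).2 ⟨w, ((G.mem_neighborFinset w t).1 ht).symm⟩)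
    exact le_trans (by lia) ((hdeg w hwX hw).le.trans (Finset.card_le_card hsub))
  have hbound := ncard_edgeSet_add_six_le (G := G.induce G.support)
    (fun hK => hG (.of_isContained ⟨Copy.induce G G.support⟩ hK)) (hcard ▸ hthree)
  rw [ncard_edgeSet_induce_of_support_subset subset_rfl, hcard] at hbound
  lia

end EdgeBound

section Coloring

open scoped Finset

variable {V α : Type*} {G : SimpleGraph V}

theorem exists_coloring_of_support_subset_pair {v y : V} {i j : α} (hG : G.support ⊆ {v, y})
    (hadj : G.Adj v y → i ≠ j) (heq : v = y → i = j) :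
    ∃ c : G.Coloring α, c v = i ∧ c y = j := by
  classical
  refine ⟨.mk (fun p => if p = v then i else j) fun {p q} hpq => ?_, if_pos rfl, ?_⟩
  · have hp := hG ⟨q, hpq⟩
    have hq := hG ⟨p, hpq.symm⟩
    have := hpq.ne
    have := hpq.symm
    grind
  · exact ite_eq_right_iff.2 fun h => heq h.symm

theorem exists_coloring_of_deleteIncidenceSet [DecidableEq α] [Fintype α] {w : V}
    [Fintype (G.neighborSet w)] (c : (G.deleteIncidenceSet w).Coloring α)
    (hc : #((G.neighborFinset w).image c) < Fintype.card α) :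
    ∃ c' : G.Coloring α, ∀ p ≠ w, c' p = c p := by
  classical
  obtain ⟨k, hk⟩ := Finset.exists_mem_notMem_of_card_lt_card (hc.trans_eq Finset.card_univ.symm)
  have hfree : ∀ p, G.Adj w p → c p ≠ k := fun p hp h =>
    hk.2 (Finset.mem_image.2 ⟨p, (G.mem_neighborFinset w p).2 hp, h⟩)
  refine ⟨.mk (Function.update c w k) fun {p q} hpq => ?_, fun p hp => Function.update_of_ne hp ..⟩
  by_cases hp : p = w
  · subst hp
    rw [Function.update_self, Function.update_of_ne hpq.ne']
    exact (hfree q hpq).symm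
  by_cases hq : q = w
  · subst hq
    rw [Function.update_self, Function.update_of_ne hpq.ne]
    exact hfree p hpq.symm
  rw [Function.update_of_ne hp, Function.update_of_ne hq]
  exact c.valid ((G.deleteIncidenceSet_adj).2 ⟨hpq, hp, hq⟩)

theorem card_image_lt_card_of_eq {ι : Type*} [DecidableEq α] {s : Finset ι} {f : ι → α} {a b : ι}
    (ha : a ∈ s) (hb : b ∈ s) (hab : a ≠ b) (h : f a = f b) : #(s.image f) < #s :=
  lt_of_le_of_ne Finset.card_image_le fun hcard =>
    hab (Finset.card_image_iff.1 hcard ha hb h)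

end Coloring

section Precoloring

open scoped Finset

variable {V : Type} {α : Type*} {G : SimpleGraph V}

theorem ncard_edgeSet_deleteIncidenceSet_lt [Finite V] {w z : V} (hwz : G.Adj w z) :
    (G.deleteIncidenceSet w).edgeSet.ncard < G.edgeSet.ncard := by
  refine Set.ncard_lt_ncard (edgeSet_ssubset_edgeSet.2 ((G.deleteIncidenceSet_le w).lt_of_ne ?_))
  intro h
  rw [← h, deleteIncidenceSet_adj] at hwz
  exact hwz.2.1 rfl

theorem exists_coloring_of_contract [Fintype α] {w a b : V} [Fintype (G.neighborSet w)]
    (hdeg : G.degree w ≤ Fintype.card α) (hwa : G.Adj w a) (hwb : G.Adj w b) (hab : a ≠ b)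
    (hnab : ¬ G.Adj a b) (c : (contract G {a, w, b}).Coloring α) :
    ∃ c' : G.Coloring α, ∀ p ≠ w, c' p = c (contractMap {a, w, b} p) := by
  classical
  let c₁ : (G.deleteIncidenceSet w).Coloring α :=
    .mk (fun p => c (contractMap {a, w, b} p)) fun {p q} hpq => by
      obtain ⟨hpq, hpw, hqw⟩ := G.deleteIncidenceSet_adj.1 hpq
      refine c.valid (contract_adj_of_adj hpq ?_)
      have := hpq.ne
      have := hpq.symm
      grind
  have hc₁ : c₁ a = c₁ b := congrArg c (contractMap_eq_contractMap_iff.2 (.inr (by simp)))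
  refine exists_coloring_of_deleteIncidenceSet c₁ ?_
  exact (card_image_lt_card_of_eq ((G.mem_neighborFinset w a).2 hwa)
    ((G.mem_neighborFinset w b).2 hwb) hab hc₁).trans_le hdeg

-- After contracting `a`, `w`, `b` to one vertex, the images of `v` and `y` may become equal or
-- adjacent only where prescribing the colours `i` and `j` still makes sense.
theorem exists_not_adj_neighbors_of_five_le_degree
    (hG : ¬ HasGraphMinor G (completeGraph (Fin 5))) {w v y : V} [Fintype (G.neighborSet w)]
    (hdeg : 5 ≤ G.degree w) {i j : α}
    (hij : i = j → ¬ (v ≠ y ∧ G.Adj w v ∧ G.Adj w y)) :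
    ∃ a b, G.Adj w a ∧ G.Adj w b ∧ a ≠ b ∧ ¬ G.Adj a b ∧ b ≠ v ∧ b ≠ y ∧
      (i = j → a ≠ v ∧ a ≠ y) := by
  classical
  by_cases h : i = j
  · have hcard : 4 ≤ #(G.neighborFinset w \ {v, y}) := by
      have hinter : #({v, y} ∩ G.neighborFinset w) ≤ 1 := by
        have := hij h
        rw [Finset.card_le_one]
        simp only [Finset.mem_inter, Finset.mem_insert, Finset.mem_singleton, mem_neighborFinset]
        grind
      rw [Finset.card_sdiff, card_neighborFinset_eq_degree]
      lia
    obtain ⟨a, ha, b, hb, hab, hnab⟩ := exists_not_adj_of_not_hasGraphMinor hG hcard fun t ht =>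
      (G.mem_neighborFinset w t).1 (Finset.mem_sdiff.1 ht).1
    simp only [Finset.mem_sdiff, mem_neighborFinset, Finset.mem_insert, Finset.mem_singleton,
      not_or] at ha hb
    exact ⟨a, b, ha.1, hb.1, hab, hnab, hb.2.1, hb.2.2, fun _ => ha.2⟩
  · have hcard : 4 ≤ #((G.neighborFinset w).erase v) := by
      have := Finset.pred_card_le_card_erase (s := G.neighborFinset w) (a := v)
      rw [card_neighborFinset_eq_degree] at this
      lia
    obtain ⟨a, ha, b, hb, hab, hnab⟩ := exists_not_adj_of_not_hasGraphMinor hG hcard fun t ht =>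
      (G.mem_neighborFinset w t).1 (Finset.mem_of_mem_erase ht)
    simp only [Finset.mem_erase, mem_neighborFinset] at ha hb
    rcases eq_or_ne b y with rfl | hby
    · exact ⟨b, a, hb.2, ha.2, hab.symm, fun h => hnab h.symm, ha.1, hab, fun hij => absurd hij h⟩
    · exact ⟨a, b, ha.2, hb.2, hab, hnab, hb.1, hby, fun hij => absurd hij h⟩

theorem exists_coloring_eq_and_eq_of_contract [Fintype α] {w a b v y : V}
    [Fintype (G.neighborSet w)] (hdeg : G.degree w ≤ Fintype.card α) (hwa : G.Adj w a)
    (hwb : G.Adj w b) (hab : a ≠ b) (hnab : ¬ G.Adj a b) (hwv : w ≠ v) (hwy : w ≠ y)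
    (hbv : b ≠ v) (hby : b ≠ y) {i j : α} (hij : i = j → a ≠ v ∧ a ≠ y)
    (hadj : G.Adj v y → i ≠ j) (heq : v = y → i = j)
    (ih : ∀ v' y', ((contract G {a, w, b}).Adj v' y' → i ≠ j) → (v' = y' → i = j) →
      ∃ c : (contract G {a, w, b}).Coloring α, c v' = i ∧ c y' = j) :
    ∃ c : G.Coloring α, c v = i ∧ c y = j := by
  have hadj' (h : (contract G {a, w, b}).Adj (contractMap {a, w, b} v) (contractMap {a, w, b} y)) :
      i ≠ j := by
    obtain ⟨-, p, q, hpq, hp, hq⟩ := h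
    rw [contractMap_eq_contractMap_iff] at hp hq
    grind
  have heq' (h : contractMap {a, w, b} v = contractMap {a, w, b} y) : i = j := by
    rw [contractMap_eq_contractMap_iff] at h
    grind
  obtain ⟨c, rfl, rfl⟩ := ih _ _ hadj' heq'
  obtain ⟨c', hc'⟩ := exists_coloring_of_contract hdeg hwa hwb hab hnab c
  exact ⟨c', hc' v hwv.symm, hc' y hwy.symm⟩

theorem exists_coloring_eq_and_eq_of_finite [Finite V] [Fintype α] (hα : 5 ≤ Fintype.card α)
    (hG : ¬ HasGraphMinor G (completeGraph (Fin 5))) {v y : V} {i j : α}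
    (hadj : G.Adj v y → i ≠ j) (heq : v = y → i = j) :
    ∃ c : G.Coloring α, c v = i ∧ c y = j := by
  classical
  induction hn : G.edgeSet.ncard using Nat.strong_induction_on generalizing V with | _ n ih
  subst hn
  have := Fintype.ofFinite V
  by_cases hsupp : G.support ⊆ {v, y}
  · exact exists_coloring_of_support_subset_pair hsupp hadj heq
  obtain ⟨t, ht, htX⟩ := Set.not_subset.1 hsupp
  obtain ⟨w, hwX, hpos, hdeg⟩ := exists_degree_le_five_of_card_le_two hG (X := {v, y})
    Finset.card_le_two ⟨t, by simpa using htX, (G.degree_pos_iff_exists_adj t).2 ht⟩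
  simp only [Finset.mem_insert, Finset.mem_singleton, not_or] at hwX
  by_cases hsel : ∃ a b, G.Adj w a ∧ G.Adj w b ∧ a ≠ b ∧ ¬ G.Adj a b ∧ b ≠ v ∧ b ≠ y ∧
      (i = j → a ≠ v ∧ a ≠ y)
  · obtain ⟨a, b, hwa, hwb, hab, hnab, hbv, hby, hij⟩ := hsel
    have hconn : (G.induce {a, w, b}).Connected := connected_induce_union
      (s := {a}) .of_subsingleton (induce_pair_connected_of_adj hwb).preconnected rfl (.inl rfl)
      hwa.symm
    have hlt : (contract G {a, w, b}).edgeSet.ncard < G.edgeSet.ncard :=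
      ncard_edgeSet_map_lt hwa (contractMap_eq_contractMap_iff.2 (.inr (by simp)))
    exact exists_coloring_eq_and_eq_of_contract (hdeg.trans hα) hwa hwb hab hnab hwX.1 hwX.2
      hbv hby hij hadj heq fun v' y' hadj' heq' =>
        ih _ hlt (fun h => hG (.of_contract hconn h)) hadj' heq' rfl
  · obtain ⟨z, hwz⟩ := (G.degree_pos_iff_exists_adj w).1 hpos
    obtain ⟨c, rfl, rfl⟩ := ih _ (ncard_edgeSet_deleteIncidenceSet_lt hwz)
      (fun h => hG (.of_isContained (.of_le (G.deleteIncidenceSet_le w)) h))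
      (fun h => hadj (G.deleteIncidenceSet_adj.1 h).1) heq rfl
    have hcolors : #((G.neighborFinset w).image c) < 5 := by
      by_contra! hfive
      refine hsel (exists_not_adj_neighbors_of_five_le_degree hG
        (hfive.trans Finset.card_image_le) fun hij ⟨hvy, hwv, hwy⟩ => ?_)
      have := card_image_lt_card_of_eq ((G.mem_neighborFinset w v).2 hwv)
        ((G.mem_neighborFinset w y).2 hwy) hvy hij
      exact (hfive.trans_lt this).not_ge hdeg
    obtain ⟨c', hc'⟩ := exists_coloring_of_deleteIncidenceSet c (hcolors.trans_le hα)
    exact ⟨c', hc' v (Ne.symm hwX.1), hc' y (Ne.symm hwX.2)⟩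

theorem exists_coloring_eq_and_eq [Fintype α] (hα : 5 ≤ Fintype.card α)
    (hG : ¬ HasGraphMinor G (completeGraph (Fin 5))) {v y : V} {i j : α}
    (hadj : G.Adj v y → i ≠ j) (heq : v = y → i = j) :
    ∃ c : G.Coloring α, c v = i ∧ c y = j := by
  classical
  have hfinite (s : Finset V) : ∃ c : (G.induce ↑(insert v (insert y s))).Coloring α,
      c ⟨v, by simp⟩ = i ∧ c ⟨y, by simp⟩ = j :=
    exists_coloring_eq_and_eq_of_finite hα
      (fun h => hG (.of_isContained ⟨Copy.induce G _⟩ h)) hadj fun h => heq (congrArg Subtype.val h)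
  choose c hcv hcy using hfinite
  let g (s : Finset V) (p : V) : α :=
    if hp : p ∈ insert v (insert y s) then c s ⟨p, hp⟩ else i
  have hg {s : Finset V} {p : V} (hp : p ∈ insert v (insert y s)) : g s p = c s ⟨p, hp⟩ :=
    dif_pos hp
  obtain ⟨χ, hχ⟩ := Finset.rado_selection g
  refine ⟨.mk χ fun {p q} hpq => ?_, ?_, ?_⟩
  · obtain ⟨t, hst, hχt⟩ := hχ {p, q}
    have hp : p ∈ t := hst (by simp)
    have hq : q ∈ t := hst (by simp)
    rw [hχt p (by simp), hχt q (by simp), hg (by simp [hp]), hg (by simp [hq])]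
    exact (c t).valid hpq
  · obtain ⟨t, -, hχt⟩ := hχ {v}
    exact (hχt v (by simp)).trans ((hg (by simp)).trans (hcv t))
  · obtain ⟨t, -, hχt⟩ := hχ {y}
    exact (hχt y (by simp)).trans ((hg (by simp)).trans (hcy t))

theorem exists_coloring_extending_path [Fintype α] (hα : 5 ≤ Fintype.card α)
    (hG : ¬ HasGraphMinor G (completeGraph (Fin 5))) {u v y : V} (huv : G.Adj u v)
    (huy : G.Adj u y) {c₀ : V → α} (hcuv : c₀ u ≠ c₀ v) (hcuy : c₀ u ≠ c₀ y)
    (hcvy : G.Adj v y → c₀ v ≠ c₀ y) :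
    ∃ c : G.Coloring α, c u = c₀ u ∧ c v = c₀ v ∧ c y = c₀ y := by
  classical
  obtain ⟨c, hcv, hcy⟩ := exists_coloring_eq_and_eq hα hG hcvy (congrArg c₀)
  have hv : c u ≠ c₀ v := hcv ▸ c.valid huv
  have hy : c u ≠ c₀ y := hcy ▸ c.valid huy
  let σ : Equiv.Perm α := Equiv.swap (c u) (c₀ u)
  refine ⟨.mk (σ ∘ c) fun hpq => σ.injective.ne (c.valid hpq), Equiv.swap_apply_left _ _, ?_, ?_⟩
  · exact (congrArg σ hcv).trans (Equiv.swap_apply_of_ne_of_ne hv.symm hcuv.symm)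
  · exact (congrArg σ hcy).trans (Equiv.swap_apply_of_ne_of_ne hy.symm hcuy.symm)

theorem mergeVerts_adj_of_adj [DecidableEq V] {u x p q : V} (hux : ¬ G.Adj u x) (hpq : G.Adj p q) :
    (mergeVerts G u x).Adj (if p = x then u else p) (if q = x then u else q) := by
  refine (fromRel_adj ..).2 ⟨fun h => ?_, .inl ⟨p, q, hpq, rfl, rfl⟩⟩
  have := hpq.ne
  have := hpq.symm
  grind

theorem adj_of_mergeVerts_adj [DecidableEq V] {u x p q : V} (hp : p ≠ u) (hq : q ≠ u)
    (h : (mergeVerts G u x).Adj p q) : G.Adj p q := by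
  obtain ⟨-, ⟨a, b, hab, ha, hb⟩ | ⟨a, b, hab, ha, hb⟩⟩ := (fromRel_adj ..).1 h
  · obtain rfl : a = p := by grind
    obtain rfl : b = q := by grind
    exact hab
  · obtain rfl : a = q := by grind
    obtain rfl : b = p := by grind
    exact hab.symm

end Precoloring

theorem extend_coloring_outer_four_cycle_same_opposite_general {W : Type} {α : Type*}
    [DecidableEq W] [Fintype α] (hα : 5 ≤ Fintype.card α) (H : SimpleGraph W) {u v x y : W}
    (huv : H.Adj u v) (huy : H.Adj u y) (hux : ¬ H.Adj u x)
    (hmerge : ¬ HasGraphMinor (mergeVerts H u x) (completeGraph (Fin 5)))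
    {c₀ : W → α} (hsame : c₀ u = c₀ x) (hcuv : c₀ u ≠ c₀ v) (hcuy : c₀ u ≠ c₀ y)
    (hcvy : H.Adj v y → c₀ v ≠ c₀ y) :
    ∃ c : H.Coloring α, c u = c₀ u ∧ c v = c₀ v ∧ c x = c₀ x ∧ c y = c₀ y := by
  have hvx : v ≠ x := fun h => hcuv (hsame.trans (congrArg c₀ h.symm))
  have hyx : y ≠ x := fun h => hcuy (hsame.trans (congrArg c₀ h.symm))
  have huv' := mergeVerts_adj_of_adj hux huv
  have huy' := mergeVerts_adj_of_adj hux huy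
  rw [ite_self, if_neg hvx] at huv'
  rw [ite_self, if_neg hyx] at huy'
  have hcvy' (h : (mergeVerts H u x).Adj v y) : c₀ v ≠ c₀ y :=
    hcvy (adj_of_mergeVerts_adj huv.ne' huy.ne' h)
  obtain ⟨c, hcu, hcv, hcy⟩ := exists_coloring_extending_path hα hmerge huv' huy' hcuv hcuy hcvy'
  refine ⟨.mk (fun p => c (if p = x then u else p)) fun hpq =>
    c.valid (mergeVerts_adj_of_adj hux hpq), ?_, ?_, ?_, ?_⟩
  · exact (congrArg c (ite_self u)).trans hcu
  · exact (congrArg c (if_neg hvx)).trans hcv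
  · exact (congrArg c (if_pos rfl)).trans (hcu.trans hsame)
  · exact (congrArg c (if_neg hyx)).trans hcy

/-- in a plane (near-)triangulation `H` with outer 4-cycle `u,v,x,y`
(so `u,x` and `v,y` are nonadjacent, and `H` as well as `H` with `u,x` identified are
planar), every proper coloring of the 4-cycle giving `u` and `x` the same color
extends to a proper 5-coloring of `H`. -/
theorem extend_coloring_outer_four_cycle_same_opposite
    {W : Type} [DecidableEq W] (H : SimpleGraph W) (hpl : IsPlanar H)
    (u v x y : W)
    (huv : H.Adj u v) (hvx : H.Adj v x) (hxy : H.Adj x y) (hyu : H.Adj y u)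
    (hux : ¬ H.Adj u x) (hvy : ¬ H.Adj v y) (hune : u ≠ x) (hvne : v ≠ y)
    (hmerge : IsPlanar (mergeVerts H u x))
    (c₀ : W → Fin 5) (hsame : c₀ u = c₀ x)
    (hcuv : c₀ u ≠ c₀ v) (hcuy : c₀ u ≠ c₀ y) :
    ∃ c : W → Fin 5, (∀ ⦃p q : W⦄, H.Adj p q → c p ≠ c q) ∧
      c u = c₀ u ∧ c v = c₀ v ∧ c x = c₀ x ∧ c y = c₀ y := by
  obtain ⟨c, hc⟩ := extend_coloring_outer_four_cycle_same_opposite_general (Fintype.card_fin 5).ge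
    H huv hyu.symm hux hmerge.1 hsame hcuv hcuy fun h => absurd h hvy
  exact ⟨c, fun _ _ h => c.valid h, hc⟩
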